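/- Let f : (0,δ₀) → ℝ be defined by f(s) = A_su(x) - u(x) for a subharmonic function u on Ω and a fixed x ∈ Ω_{δ₀}, where A_s denotes the spherical mean over the sphere of radius s. Then f is nonnegative and nondecreasing on (0,δ₀). -/

import Mathlib

open MeasureTheory Metric Set Filter

noncomputable section

/-- Subharmonicity via the sub-mean value property over closed balls. -/
def SubharmonicOn {n : ℕ} (u : EuclideanSpace ℝ (Fin n) → ℝ)
    (Ω : Set (EuclideanSpace ℝ (Fin n))) : Prop :=
  UpperSemicontinuousOn u Ω ∧ LocallyIntegrableOn u Ω ∧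
    ∀ x r, 0 < r → closedBall x r ⊆ Ω → u x ≤ ⨍ y in closedBall x r, u y

/-- The surface measure on the unit sphere of `ℝⁿ`. -/
def sphereMeasure (n : ℕ) : Measure (sphere (0 : EuclideanSpace ℝ (Fin n)) 1) :=
  (volume : Measure (EuclideanSpace ℝ (Fin n))).toSphere

/-- Total area `σ_{n-1}` of the unit sphere of `ℝⁿ`. -/
def sphereArea (n : ℕ) : ℝ := ((sphereMeasure n) univ).toReal

/-- Spherical mean `A_s u (x)` of `u` over the sphere of radius `s` centered at `x`. -/
def sphericalMean {n : ℕ} (u : EuclideanSpace ℝ (Fin n) → ℝ)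
    (x : EuclideanSpace ℝ (Fin n)) (s : ℝ) : ℝ :=
  (sphereArea n)⁻¹ * ∫ ξ, u (x + s • (ξ : EuclideanSpace ℝ (Fin n))) ∂(sphereMeasure n)

/-- Volume mean `Λ_δ u (x)` of `u` over the ball of radius `δ` centered at `x`. -/
def volumeMean {n : ℕ} (u : EuclideanSpace ℝ (Fin n) → ℝ)
    (x : EuclideanSpace ℝ (Fin n)) (δ : ℝ) : ℝ :=
  ⨍ y in ball x δ, u y

/-- Max characteristic `M_δ u (x) = max_{|y-x| ≤ δ} u (y)`. -/
def maxBall {n : ℕ} (u : EuclideanSpace ℝ (Fin n) → ℝ)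
    (x : EuclideanSpace ℝ (Fin n)) (δ : ℝ) : ℝ :=
  sSup (u '' closedBall x δ)

/-- Oscillation of `u` on a set. -/
def oscOn {n : ℕ} (u : EuclideanSpace ℝ (Fin n) → ℝ)
    (s : Set (EuclideanSpace ℝ (Fin n))) : ℝ :=
  sSup (u '' s) - sInf (u '' s)

/-- `Ω_δ = {x ∈ Ω : dist(x, ∂Ω) > δ}`. -/
def shrink {n : ℕ} (Ω : Set (EuclideanSpace ℝ (Fin n))) (δ : ℝ) :
    Set (EuclideanSpace ℝ (Fin n)) :=
  {x ∈ Ω | δ < Metric.infDist x Ωᶜ}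

/-- Regularization `R_δ u (x)` by a radial kernel `ρ` (given as a function of the radius). -/
def radialReg {n : ℕ} (ρ : ℝ → ℝ) (u : EuclideanSpace ℝ (Fin n) → ℝ)
    (x : EuclideanSpace ℝ (Fin n)) (δ : ℝ) : ℝ :=
  ∫ ξ in ball (0 : EuclideanSpace ℝ (Fin n)) 1, u (x + δ • ξ) * ρ ‖ξ‖

/-- A modulus of continuity: continuous, increasing, subadditive, vanishing at `0`. -/
structure ModulusOfContinuity (κ : ℝ → ℝ) : Prop where
  continuous : ContinuousOn κ (Ici 0)
  mono : ∀ s t, 0 ≤ s → s ≤ t → κ s ≤ κ t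
  subadd : ∀ s t, 0 ≤ s → 0 ≤ t → κ (s + t) ≤ κ s + κ t
  zero : κ 0 = 0
  nonneg : ∀ t, 0 ≤ t → 0 ≤ κ t

end

/-!
Let `M` bound `u` on the closed ball. Working with the `[0, ∞]`-valued function `M - u` removes all
integrability questions, and this function is lower semicontinuous and satisfies the super-mean
value inequality. Averaging it over rotations about the centre preserves both properties, because
by polar coordinates the average of a ball over the rotations is a radial kernel. A radial function
with both properties decreases with the radius: on `[0, t]` its last minimiser must be `t`, since a
minimiser `ρ < t` would be the centre of a ball of radius `t - ρ` on which the function is constant,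
and would not be the last. So the spherical means of `u` increase from their value `u x` at
radius `0`.
-/

open scoped ENNReal Pointwise

section SemicontinuousFunctions

variable {α β : Type*} [TopologicalSpace α]

open Classical in
lemma lowerSemicontinuous_piecewise_top [Preorder β] [OrderTop β] {s : Set α} (hs : IsClosed s)
    {f : α → β} (hf : LowerSemicontinuousOn f s) :
    LowerSemicontinuous (s.piecewise f fun _ ↦ ⊤) := by
  intro y a ha
  by_cases hy : y ∈ s
  · rw [piecewise_eq_of_mem _ _ _ hy] at ha
    filter_upwards [eventually_nhdsWithin_iff.1 (hf y hy a ha)] with z hz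
    by_cases hzs : z ∈ s
    · simpa only [piecewise_eq_of_mem _ _ _ hzs] using hz hzs
    · simpa only [piecewise_eq_of_notMem _ _ _ hzs] using ha.trans_le le_top
  · rw [piecewise_eq_of_notMem _ _ _ hy] at ha
    filter_upwards [hs.isOpen_compl.mem_nhds hy] with z hz
    rwa [piecewise_eq_of_notMem _ _ _ hz]

lemma exists_isMinOn_forall_lt_of_lowerSemicontinuous [LinearOrder α] [ClosedIciTopology α]
    [LinearOrder β] {f : α → β} (hf : LowerSemicontinuous f) {s : Set α} (hs : IsCompact s)
    (hne : s.Nonempty) :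
    ∃ a ∈ s, IsMinOn f s a ∧ ∀ b ∈ s, a < b → f a < f b := by
  obtain ⟨c, hcs, hc⟩ := (hf.lowerSemicontinuousOn s).exists_isMinOn hne hs
  obtain ⟨a, ⟨has, hac⟩, ha⟩ :=
    ((hf.lowerSemicontinuousOn s).isCompact_inter_preimage_Iic hs (f c)).exists_isGreatest
      ⟨c, hcs, le_rfl⟩
  refine ⟨a, has, fun b hb ↦ le_trans hac (hc hb), fun b hb hab ↦ ?_⟩
  by_contra hba
  exact hab.not_ge (ha ⟨hb, (not_lt.1 hba).trans hac⟩)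

end SemicontinuousFunctions

/-- The mean value inequality of superharmonic functions over the closed balls contained in `s`.
Stating it for `[0, ∞]`-valued functions makes integrability hypotheses unnecessary. -/
def SuperMeanValueOn {X : Type*} [PseudoMetricSpace X] [MeasurableSpace X] (μ : Measure X)
    (h : X → ℝ≥0∞) (s : Set X) : Prop :=
  ∀ y r, 0 < r → closedBall y r ⊆ s → ∫⁻ z in closedBall y r, h z ∂μ ≤ μ (closedBall y r) * h y

namespace SuperMeanValueOn

theorem eqOn_ball_of_isMinOn {X : Type*} [PseudoMetricSpace X] [ProperSpace X]
    [MeasurableSpace X] [BorelSpace X] {μ : Measure X} [μ.IsOpenPosMeasure]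
    [IsFiniteMeasureOnCompacts μ] {h : X → ℝ≥0∞} {s : Set X} (hmv : SuperMeanValueOn μ h s)
    (hlsc : LowerSemicontinuous h) {y : X} {r : ℝ} (hr : 0 < r) (hs : closedBall y r ⊆ s)
    (hmin : IsMinOn h (closedBall y r) y) (hy : h y ≠ ∞) :
    EqOn h (fun _ ↦ h y) (ball y r) := by
  have hae : (fun _ ↦ h y) =ᵐ[μ.restrict (closedBall y r)] h := by
    refine ae_eq_of_ae_le_of_lintegral_le
      ((ae_restrict_iff' measurableSet_closedBall).2 (ae_of_all _ hmin)) ?_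
      hlsc.measurable.aemeasurable ?_
    · rw [setLIntegral_const]
      exact ENNReal.mul_ne_top hy measure_closedBall_lt_top.ne
    · rw [setLIntegral_const, mul_comm]
      exact hmv y r hr hs
  have hnull : μ (ball y r ∩ h ⁻¹' Ioi (h y)) = 0 := by
    refine measure_mono_null ?_ ((ae_restrict_iff' measurableSet_closedBall).1 hae)
    exact fun z hz hzy ↦ (mem_Ioi.1 hz.2).ne (hzy (ball_subset_closedBall hz.1))
  have hempty := ((isOpen_ball.inter (hlsc.isOpen_preimage _)).measure_eq_zero_iff μ).1 hnull
  refine fun z hz ↦ le_antisymm (not_lt.1 fun hlt ↦ ?_) (hmin (ball_subset_closedBall hz))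
  exact hempty.subset ⟨hz, hlt⟩

theorem comp_add_left {E : Type*} [SeminormedAddCommGroup E] [MeasurableSpace E] [BorelSpace E]
    {μ : Measure E} [μ.IsAddLeftInvariant] {h : E → ℝ≥0∞} {s : Set E}
    (hmv : SuperMeanValueOn μ h s) (x : E) :
    SuperMeanValueOn μ (fun z ↦ h (x + z)) ((x + ·) ⁻¹' s) := by
  intro y r hr hys
  have hball : (x + ·) ⁻¹' closedBall (x + y) r = closedBall y r := by
    rw [preimage_add_left_closedBall, neg_add_cancel_left]
  have hsub : closedBall (x + y) r ⊆ s := by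
    rw [← hball] at hys
    exact (preimage_subset_preimage_iff (by simp [(add_left_surjective x).range_eq])).1 hys
  have htrans := measurePreserving_add_left μ x
  rw [← hball, htrans.setLIntegral_comp_preimage_emb (measurableEmbedding_addLeft x),
    htrans.measure_preimage measurableSet_closedBall.nullMeasurableSet]
  exact hmv (x + y) r hr hsub

end SuperMeanValueOn

/-- The integral of `h` over the sphere of radius `ρ` centred at the origin, parametrised by the
unit sphere and not normalised: at `ρ = 0` it is `h 0` times the area of the unit sphere. -/
noncomputable def sphereLIntegral {E : Type*} [NormedAddCommGroup E] [NormedSpace ℝ E]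
    [MeasurableSpace E] (μ : Measure E) (h : E → ℝ≥0∞) (ρ : ℝ) : ℝ≥0∞ :=
  ∫⁻ ξ : sphere (0 : E) 1, h (ρ • (ξ : E)) ∂μ.toSphere

section SphereLIntegral

variable {E : Type*} [NormedAddCommGroup E] [NormedSpace ℝ E] [MeasurableSpace E] {μ : Measure E}

lemma sphereLIntegral_zero (h : E → ℝ≥0∞) :
    sphereLIntegral μ h 0 = h 0 * μ.toSphere univ := by
  simp only [sphereLIntegral, zero_smul, lintegral_const]

lemma lowerSemicontinuous_sphereLIntegral [BorelSpace E] {h : E → ℝ≥0∞}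
    (hh : LowerSemicontinuous h) : LowerSemicontinuous (sphereLIntegral μ h) := by
  refine lowerSemicontinuous_iff_le_liminf.2 fun ρ ↦ ?_
  refine le_trans (lintegral_mono fun ξ ↦ ?_)
    (lintegral_liminf_le fun _ ↦ hh.measurable.comp (by fun_prop))
  have hline : Continuous fun t : ℝ ↦ t • (ξ : E) := by fun_prop
  exact (hh.comp hline).le_liminf ρ

end SphereLIntegral

section PolarCoordinates

variable {E : Type*} [NormedAddCommGroup E] [NormedSpace ℝ E] [FiniteDimensional ℝ E]
  [MeasurableSpace E] [BorelSpace E] {μ : Measure E} [μ.IsAddHaarMeasure]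

lemma measurable_sphereLIntegral {h : E → ℝ≥0∞} (hh : Measurable h) :
    Measurable (sphereLIntegral μ h) :=
  Measurable.lintegral_prod_right' (f := fun p : ℝ × sphere (0 : E) 1 ↦ h (p.1 • (p.2 : E)))
    (hh.comp (by fun_prop))

lemma lintegral_eq_lintegral_sphereLIntegral [Nontrivial E] {f : E → ℝ≥0∞} (hf : Measurable f) :
    ∫⁻ z, f z ∂μ = ∫⁻ ρ : Ioi (0 : ℝ), sphereLIntegral μ f ρ
      ∂(Measure.volumeIoiPow (Module.finrank ℝ E - 1)) := by
  have hpolar : Measurable fun p : sphere (0 : E) 1 × Ioi (0 : ℝ) ↦ f ((p.2 : ℝ) • (p.1 : E)) :=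
    hf.comp (by fun_prop)
  calc ∫⁻ z, f z ∂μ
      = ∫⁻ z : ({0}ᶜ : Set E), f z ∂(Measure.comap Subtype.val μ) := by
        rw [lintegral_subtype_comap (measurableSet_singleton _).compl f, restrict_compl_singleton]
    _ = ∫⁻ z : ({0}ᶜ : Set E), f ((homeomorphUnitSphereProd E z).2.1 •
          ((homeomorphUnitSphereProd E z).1 : E)) ∂(Measure.comap Subtype.val μ) := by
        refine lintegral_congr fun z ↦ ?_
        have hz : ‖(z : E)‖ ≠ 0 := norm_ne_zero_iff.2 z.2
        simp [smul_smul, hz]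
    _ = _ := by
        rw [μ.measurePreserving_homeomorphUnitSphereProd.lintegral_comp hpolar,
          lintegral_prod_symm' _ hpolar]
        rfl

theorem lintegral_mul_sphereLIntegral_norm [Nontrivial E] {k h : E → ℝ≥0∞} (hk : Measurable k)
    (hh : Measurable h) (hrad : ∀ z w, ‖z‖ = ‖w‖ → k z = k w) :
    ∫⁻ z, k z * sphereLIntegral μ h ‖z‖ ∂μ = μ.toSphere univ * ∫⁻ z, k z * h z ∂μ := by
  obtain ⟨e, he⟩ := exists_norm_eq E zero_le_one
  have hleft : Measurable fun z : E ↦ k z * sphereLIntegral μ h ‖z‖ :=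
    hk.mul ((measurable_sphereLIntegral hh).comp measurable_norm)
  rw [lintegral_eq_lintegral_sphereLIntegral hleft,
    lintegral_eq_lintegral_sphereLIntegral (f := fun z ↦ k z * h z) (hk.mul hh),
    ← lintegral_const_mul' _ _ (measure_ne_top _ _)]
  refine lintegral_congr fun ρ ↦ ?_
  have hnorm (ξ : sphere (0 : E) 1) : ‖(ρ : ℝ) • (ξ : E)‖ = ρ := by
    simp [norm_smul, abs_of_pos (mem_Ioi.1 ρ.2)]
  have hconst (ξ : sphere (0 : E) 1) : k ((ρ : ℝ) • (ξ : E)) = k ((ρ : ℝ) • e) :=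
    hrad _ _ (by simp [norm_smul, he])
  have hsphere : Measurable fun ξ : sphere (0 : E) 1 ↦ h ((ρ : ℝ) • (ξ : E)) :=
    hh.comp (by fun_prop)
  calc sphereLIntegral μ (fun z ↦ k z * sphereLIntegral μ h ‖z‖) ρ
      = k ((ρ : ℝ) • e) * sphereLIntegral μ h ρ * μ.toSphere univ := by
        rw [sphereLIntegral]
        simp only [hnorm, hconst, lintegral_const]
    _ = μ.toSphere univ * (k ((ρ : ℝ) • e) * sphereLIntegral μ h ρ) := mul_comm _ _
    _ = μ.toSphere univ * sphereLIntegral μ (fun z ↦ k z * h z) ρ := by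
        simp only [sphereLIntegral, hconst, lintegral_const_mul _ hsphere]

lemma measurable_sphereLIntegral_indicator_closedBall (ρ r : ℝ) :
    Measurable fun z : E ↦ sphereLIntegral μ ((closedBall z r).indicator 1) ρ := by
  have hB : MeasurableSet {p : E × sphere (0 : E) 1 | dist (ρ • (p.2 : E)) p.1 ≤ r} :=
    measurableSet_le (by fun_prop) measurable_const
  exact Measurable.lintegral_prod_right' ((measurable_const (a := (1 : ℝ≥0∞))).indicator hB)

lemma lintegral_setLIntegral_closedBall_eq {f : E → ℝ≥0∞} (hf : Measurable f) (ρ r : ℝ) :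
    ∫⁻ ξ : sphere (0 : E) 1, ∫⁻ z in closedBall (ρ • (ξ : E)) r, f z ∂μ ∂μ.toSphere =
      ∫⁻ z, sphereLIntegral μ ((closedBall z r).indicator 1) ρ * f z ∂μ := by
  have hB : MeasurableSet {p : sphere (0 : E) 1 × E | dist (ρ • (p.1 : E)) p.2 ≤ r} :=
    measurableSet_le (by fun_prop) measurable_const
  have hind : Measurable fun p : sphere (0 : E) 1 × E ↦
      (closedBall p.2 r).indicator 1 (ρ • (p.1 : E)) * f p.2 :=
    ((measurable_const (a := (1 : ℝ≥0∞))).indicator hB).mul (hf.comp measurable_snd)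
  calc ∫⁻ ξ : sphere (0 : E) 1, ∫⁻ z in closedBall (ρ • (ξ : E)) r, f z ∂μ ∂μ.toSphere
      = ∫⁻ ξ : sphere (0 : E) 1, ∫⁻ z, (closedBall z r).indicator 1 (ρ • (ξ : E)) * f z ∂μ
          ∂μ.toSphere := by
        refine lintegral_congr fun ξ ↦ ?_
        rw [← lintegral_indicator measurableSet_closedBall]
        refine lintegral_congr fun z ↦ ?_
        simp only [indicator, mem_closedBall, dist_comm, Pi.one_apply, ite_mul, one_mul, zero_mul]
    _ = ∫⁻ z, ∫⁻ ξ : sphere (0 : E) 1, (closedBall z r).indicator 1 (ρ • (ξ : E)) * f z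
          ∂μ.toSphere ∂μ := lintegral_lintegral_swap hind.aemeasurable
    _ = ∫⁻ z, sphereLIntegral μ ((closedBall z r).indicator 1) ρ * f z ∂μ := by
        refine lintegral_congr fun z ↦ lintegral_mul_const _ ?_
        exact ((measurable_const (a := (1 : ℝ≥0∞))).indicator measurableSet_closedBall).comp
          (by fun_prop)

end PolarCoordinates

section Rotations

lemma exists_linearIsometryEquiv_apply_eq {E : Type*} [NormedAddCommGroup E] [InnerProductSpace ℝ E]
    {z w : E} (h : ‖z‖ = ‖w‖) : ∃ L : E ≃ₗᵢ[ℝ] E, L z = w :=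
  ⟨_, Submodule.reflection_sub h⟩

variable {E : Type*} [NormedAddCommGroup E] [InnerProductSpace ℝ E] [FiniteDimensional ℝ E]
  [MeasurableSpace E] [BorelSpace E]

lemma measurePreserving_sphere_restrict (L : E ≃ₗᵢ[ℝ] E)
    (hL : MapsTo L (sphere (0 : E) 1) (sphere 0 1)) :
    MeasurePreserving hL.restrict (volume : Measure E).toSphere (volume : Measure E).toSphere := by
  have hmeas : Measurable hL.restrict := (L.continuous.restrict hL).measurable
  have hcone (s : Set (sphere (0 : E) 1)) : L ⁻¹' (Ioo (0 : ℝ) 1 • ((↑) '' s : Set E)) =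
      Ioo (0 : ℝ) 1 • ((↑) '' (hL.restrict ⁻¹' s) : Set E) := by
    ext y
    simp only [mem_preimage, Set.mem_smul, mem_image]
    constructor
    · rintro ⟨a, ha, _, ⟨ξ, hξ, rfl⟩, hy⟩
      refine ⟨a, ha, _, ⟨⟨L.symm ξ, by simp⟩, ?_, rfl⟩, L.injective (by simpa using hy)⟩
      simpa [MapsTo.restrict, Subtype.map] using hξ
    · rintro ⟨a, ha, _, ⟨ξ, hξ, rfl⟩, rfl⟩
      exact ⟨a, ha, _, ⟨_, hξ, rfl⟩, by simp⟩
  refine ⟨hmeas, Measure.ext fun s hs ↦ ?_⟩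
  rw [Measure.map_apply hmeas hs, Measure.toSphere_apply' _ (hmeas hs),
    Measure.toSphere_apply' _ hs, ← hcone,
    L.measurePreserving.measure_preimage_emb L.toHomeomorph.measurableEmbedding]

lemma sphereLIntegral_comp_linearIsometryEquiv {h : E → ℝ≥0∞} (hh : Measurable h)
    (L : E ≃ₗᵢ[ℝ] E) (ρ : ℝ) :
    sphereLIntegral volume (h ∘ L) ρ = sphereLIntegral volume h ρ := by
  have hL : MapsTo L (sphere (0 : E) 1) (sphere 0 1) := fun ξ hξ ↦ by simpa using hξ
  have hsphere : Measurable fun ξ : sphere (0 : E) 1 ↦ h (ρ • (ξ : E)) := hh.comp (by fun_prop)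
  have := (measurePreserving_sphere_restrict L hL).lintegral_comp hsphere
  simpa [sphereLIntegral] using this

lemma sphereLIntegral_indicator_closedBall_eq_of_norm_eq {z w : E} (h : ‖z‖ = ‖w‖) (ρ r : ℝ) :
    sphereLIntegral volume ((closedBall z r).indicator 1) ρ =
      sphereLIntegral volume ((closedBall w r).indicator 1) ρ := by
  obtain ⟨L, rfl⟩ := exists_linearIsometryEquiv_apply_eq h
  rw [← sphereLIntegral_comp_linearIsometryEquiv (h := (closedBall (L z) r).indicator 1)
    (measurable_one.indicator measurableSet_closedBall) L]
  congr 1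
  ext y
  simp [indicator]

lemma setLIntegral_closedBall_comp_norm_eq_of_norm_eq (g : ℝ → ℝ≥0∞) {z w : E} (h : ‖z‖ = ‖w‖)
    (r : ℝ) : ∫⁻ y in closedBall z r, g ‖y‖ = ∫⁻ y in closedBall w r, g ‖y‖ := by
  obtain ⟨L, rfl⟩ := exists_linearIsometryEquiv_apply_eq h
  have := L.measurePreserving.setLIntegral_comp_preimage_emb
    L.toHomeomorph.measurableEmbedding (fun y ↦ g ‖y‖) (closedBall (L z) r)
  simpa [L.isometry.preimage_closedBall] using this

namespace SuperMeanValueOn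

variable [Nontrivial E] {h : E → ℝ≥0∞} {R : ℝ}

theorem sphereLIntegral_norm (hmv : SuperMeanValueOn volume h (closedBall 0 R))
    (hh : Measurable h) :
    SuperMeanValueOn volume (fun z : E ↦ sphereLIntegral volume h ‖z‖) (closedBall 0 R) := by
  intro y r hr hy
  set σ : Measure (sphere (0 : E) 1) := (volume : Measure E).toSphere
  have hnorm (ξ : sphere (0 : E) 1) : ‖‖y‖ • (ξ : E)‖ = ‖y‖ := by simp [norm_smul]
  have hvol (ξ : sphere (0 : E) 1) :
      volume (closedBall (‖y‖ • (ξ : E)) r) = volume (closedBall y r) := by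
    rw [Measure.addHaar_closedBall_center, Measure.addHaar_closedBall_center volume y]
  have hmem (ξ : sphere (0 : E) 1) : closedBall (‖y‖ • (ξ : E)) r ⊆ closedBall 0 R := by
    obtain ⟨L, hL⟩ := exists_linearIsometryEquiv_apply_eq (hnorm ξ).symm
    rw [← hL, ← L.image_closedBall, image_subset_iff]
    exact hy.trans fun z hz ↦ by simpa using hz
  have hG : Measurable fun z : E ↦ sphereLIntegral volume h ‖z‖ :=
    (measurable_sphereLIntegral hh).comp measurable_norm
  have haverage : σ univ * ∫⁻ z in closedBall y r, sphereLIntegral volume h ‖z‖ ≤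
      σ univ * (volume (closedBall y r) * sphereLIntegral volume h ‖y‖) :=
    calc σ univ * ∫⁻ z in closedBall y r, sphereLIntegral volume h ‖z‖
        = ∫⁻ ξ : sphere (0 : E) 1, ∫⁻ z in closedBall (‖y‖ • (ξ : E)) r,
            sphereLIntegral volume h ‖z‖ ∂volume ∂σ := by
          simp only [setLIntegral_closedBall_comp_norm_eq_of_norm_eq _ (hnorm _),
            lintegral_const, mul_comm]
      _ = ∫⁻ z : E, sphereLIntegral volume ((closedBall z r).indicator 1) ‖y‖ *
            sphereLIntegral volume h ‖z‖ := lintegral_setLIntegral_closedBall_eq hG _ _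
      _ = σ univ * ∫⁻ z : E, sphereLIntegral volume ((closedBall z r).indicator 1) ‖y‖ * h z :=
          lintegral_mul_sphereLIntegral_norm
            (measurable_sphereLIntegral_indicator_closedBall _ _) hh
            fun _ _ hzw ↦ sphereLIntegral_indicator_closedBall_eq_of_norm_eq hzw _ _
      _ = σ univ * ∫⁻ ξ : sphere (0 : E) 1, ∫⁻ z in closedBall (‖y‖ • (ξ : E)) r, h z ∂volume
            ∂σ := by rw [lintegral_setLIntegral_closedBall_eq hh]
      _ ≤ σ univ * ∫⁻ ξ : sphere (0 : E) 1, volume (closedBall y r) * h (‖y‖ • (ξ : E)) ∂σ := by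
          gcongr with ξ
          exact (hmv _ r hr (hmem ξ)).trans_eq (by rw [hvol])
      _ = σ univ * (volume (closedBall y r) * sphereLIntegral volume h ‖y‖) := by
          rw [lintegral_const_mul' _ _ measure_closedBall_lt_top.ne, sphereLIntegral]
  refine (ENNReal.mul_le_mul_iff_right ?_ (measure_ne_top σ _)).1 haverage
  exact Measure.measure_univ_ne_zero.2 (Measure.toSphere_ne_zero volume)

end SuperMeanValueOn

theorem antitoneOn_of_superMeanValueOn_norm [Nontrivial E] {g : ℝ → ℝ≥0∞} {R : ℝ}
    (hg : LowerSemicontinuous g) (hg₀ : g 0 ≠ ∞)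
    (hmv : SuperMeanValueOn volume (fun z : E ↦ g ‖z‖) (closedBall 0 R)) :
    AntitoneOn g (Icc 0 R) := by
  intro s hs t ht hst
  obtain ⟨ρ, ⟨hρ, hρt⟩, hmin, hlast⟩ := exists_isMinOn_forall_lt_of_lowerSemicontinuous hg
    (isCompact_Icc (a := 0) (b := t)) ⟨0, left_mem_Icc.2 ht.1⟩
  suffices hρ_eq : ρ = t from hρ_eq ▸ hmin ⟨hs.1, hst⟩
  by_contra hne
  have hlt : ρ < t := lt_of_le_of_ne hρt hne
  obtain ⟨e, he⟩ := exists_norm_eq E zero_le_one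
  have hnorm {a : ℝ} (ha : 0 ≤ a) : ‖a • e‖ = a := by simp [norm_smul, he, abs_of_nonneg ha]
  have hball : closedBall (ρ • e) (t - ρ) ⊆ closedBall 0 t :=
    closedBall_subset_closedBall' (by rw [dist_zero_right, hnorm hρ, sub_add_cancel])
  have hmin_center : IsMinOn (fun z : E ↦ g ‖z‖) (closedBall (ρ • e) (t - ρ)) (ρ • e) :=
    fun z hz ↦ by
      change g ‖ρ • e‖ ≤ g ‖z‖
      rw [hnorm hρ]
      exact hmin ⟨norm_nonneg z, mem_closedBall_zero_iff.1 (hball hz)⟩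
  have hfin : g ‖ρ • e‖ ≠ ∞ := by
    rw [hnorm hρ]
    exact ne_top_of_le_ne_top hg₀ (hmin ⟨le_rfl, ht.1⟩)
  have hconst := hmv.eqOn_ball_of_isMinOn (hg.comp continuous_norm) (sub_pos.2 hlt)
    (hball.trans (closedBall_subset_closedBall ht.2)) hmin_center hfin
  have hmid : ((ρ + t) / 2) • e ∈ ball (ρ • e) (t - ρ) := by
    rw [mem_ball, dist_eq_norm, ← sub_smul, hnorm (by linarith)]
    linarith
  have heq : g ((ρ + t) / 2) = g ρ := by
    simpa only [hnorm hρ, hnorm (show 0 ≤ (ρ + t) / 2 by linarith)] using hconst hmid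
  exact (hlast _ ⟨by linarith, by linarith⟩ (by linarith)).ne' heq

theorem SuperMeanValueOn.antitoneOn_sphereLIntegral [Nontrivial E] {h : E → ℝ≥0∞} {R : ℝ}
    (hmv : SuperMeanValueOn volume h (closedBall 0 R)) (hlsc : LowerSemicontinuous h)
    (h₀ : h 0 ≠ ∞) : AntitoneOn (sphereLIntegral volume h) (Icc 0 R) := by
  refine antitoneOn_of_superMeanValueOn_norm (lowerSemicontinuous_sphereLIntegral hlsc) ?_
    (hmv.sphereLIntegral_norm hlsc.measurable)
  rw [sphereLIntegral_zero]
  exact ENNReal.mul_ne_top h₀ (measure_ne_top _ _)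

end Rotations

section Subharmonic

open Classical in
/-- The function `M - u` on `s`, extended by `∞` off `s`. If `M` bounds `u` on the closed set `s`,
this turns an upper semicontinuous `u` into a `[0, ∞]`-valued lower semicontinuous function on the
whole space. -/
noncomputable def gapBelow {X : Type*} (u : X → ℝ) (M : ℝ) (s : Set X) : X → ℝ≥0∞ :=
  s.piecewise (fun y ↦ ENNReal.ofReal (M - u y)) fun _ ↦ ∞

lemma gapBelow_of_mem {X : Type*} {u : X → ℝ} {M : ℝ} {s : Set X} {y : X} (hy : y ∈ s) :
    gapBelow u M s y = ENNReal.ofReal (M - u y) :=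
  if_pos hy

lemma lowerSemicontinuous_gapBelow {X : Type*} [TopologicalSpace X] {u : X → ℝ} {s : Set X}
    (hs : IsClosed s) (hu : UpperSemicontinuousOn u s) (M : ℝ) :
    LowerSemicontinuous (gapBelow u M s) :=
  lowerSemicontinuous_piecewise_top hs <| Continuous.comp_upperSemicontinuousOn_antitone
    (g := fun t ↦ ENNReal.ofReal (M - t))
    (ENNReal.continuous_ofReal.comp (continuous_const.sub continuous_id)) hu
    fun _ _ hab ↦ ENNReal.ofReal_le_ofReal (sub_le_sub_left hab M)

variable {n : ℕ} {u : EuclideanSpace ℝ (Fin n) → ℝ} {Ω s : Set (EuclideanSpace ℝ (Fin n))}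

namespace SubharmonicOn

lemma measureReal_mul_le_setIntegral (hu : SubharmonicOn u Ω) {y : EuclideanSpace ℝ (Fin n)}
    {r : ℝ} (hr : 0 < r) (hy : closedBall y r ⊆ Ω) :
    volume.real (closedBall y r) * u y ≤ ∫ z in closedBall y r, u z := by
  have hpos : 0 < volume.real (closedBall y r) :=
    ENNReal.toReal_pos (measure_closedBall_pos _ _ hr).ne' measure_closedBall_lt_top.ne
  have hmean := hu.2.2 y r hr hy
  rwa [setAverage_eq, smul_eq_mul, ← div_eq_inv_mul, le_div_iff₀ hpos, mul_comm] at hmean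

theorem superMeanValueOn_gapBelow (hu : SubharmonicOn u Ω) (hs : s ⊆ Ω) {M : ℝ}
    (hM : ∀ y ∈ s, u y ≤ M) : SuperMeanValueOn volume (gapBelow u M s) s := by
  intro y r hr hy
  have hfin : volume (closedBall y r) ≠ ∞ := measure_closedBall_lt_top.ne
  have hint : IntegrableOn u (closedBall y r) :=
    hu.2.1.integrableOn_compact_subset (hy.trans hs) (isCompact_closedBall y r)
  have hconst : IntegrableOn (fun _ ↦ M) (closedBall y r) := integrableOn_const hfin
  have hnonneg : 0 ≤ᵐ[volume.restrict (closedBall y r)] fun z ↦ M - u z :=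
    (ae_restrict_iff' measurableSet_closedBall).2
      (ae_of_all _ fun z hz ↦ sub_nonneg.2 (hM z (hy hz)))
  calc ∫⁻ z in closedBall y r, gapBelow u M s z
      = ∫⁻ z in closedBall y r, ENNReal.ofReal (M - u z) :=
        setLIntegral_congr_fun measurableSet_closedBall fun z hz ↦ gapBelow_of_mem (hy hz)
    _ = ENNReal.ofReal (∫ z in closedBall y r, (M - u z)) :=
        (ofReal_integral_eq_lintegral_ofReal (hconst.sub hint) hnonneg).symm
    _ ≤ ENNReal.ofReal (volume.real (closedBall y r) * (M - u y)) := by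
        refine ENNReal.ofReal_le_ofReal ?_
        rw [integral_sub hconst hint, setIntegral_const, smul_eq_mul, mul_sub]
        exact sub_le_sub_left (hu.measureReal_mul_le_setIntegral hr (hy.trans hs)) _
    _ = volume (closedBall y r) * gapBelow u M s y := by
        rw [gapBelow_of_mem (hy (mem_closedBall_self hr.le)),
          ENNReal.ofReal_mul measureReal_nonneg, ofReal_measureReal hfin]

end SubharmonicOn

instance : IsFiniteMeasure (sphereMeasure n) :=
  inferInstanceAs (IsFiniteMeasure volume.toSphere)

lemma sphereArea_pos [NeZero n] : 0 < sphereArea n :=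
  ENNReal.toReal_pos (Measure.measure_univ_ne_zero.2 (Measure.toSphere_ne_zero volume))
    (measure_ne_top _ _)

lemma inv_sphereArea_mul_integral_const [NeZero n] (c : ℝ) :
    (sphereArea n)⁻¹ * ∫ _, c ∂sphereMeasure n = c := by
  rw [integral_const, smul_eq_mul]
  exact inv_mul_cancel_left₀ sphereArea_pos.ne' c

lemma sphericalMean_zero [NeZero n] (u : EuclideanSpace ℝ (Fin n) → ℝ)
    (x : EuclideanSpace ℝ (Fin n)) : sphericalMean u x 0 = u x := by
  simp only [sphericalMean, zero_smul, add_zero, inv_sphereArea_mul_integral_const]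

lemma sphericalMean_eq_sub_sphereLIntegral_gapBelow [NeZero n] {x : EuclideanSpace ℝ (Fin n)}
    {M ρ : ℝ} (hs : ∀ ξ : sphere (0 : EuclideanSpace ℝ (Fin n)) 1,
      x + ρ • (ξ : EuclideanSpace ℝ (Fin n)) ∈ s)
    (hM : ∀ y ∈ s, u y ≤ M) (hmeas : Measurable (gapBelow u M s))
    (hfin : sphereLIntegral volume (fun z ↦ gapBelow u M s (x + z)) ρ ≠ ∞) :
    sphericalMean u x ρ = M - (sphereArea n)⁻¹ *
      (sphereLIntegral volume (fun z ↦ gapBelow u M s (x + z)) ρ).toReal := by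
  have hgap (ξ : sphere (0 : EuclideanSpace ℝ (Fin n)) 1) :
      u (x + ρ • (ξ : EuclideanSpace ℝ (Fin n))) =
        M - (gapBelow u M s (x + ρ • (ξ : EuclideanSpace ℝ (Fin n)))).toReal := by
    rw [gapBelow_of_mem (hs ξ), ENNReal.toReal_ofReal (sub_nonneg.2 (hM _ (hs ξ))), sub_sub_cancel]
  have hsphere : AEMeasurable (fun ξ : sphere (0 : EuclideanSpace ℝ (Fin n)) 1 ↦
      gapBelow u M s (x + ρ • (ξ : EuclideanSpace ℝ (Fin n)))) (sphereMeasure n) :=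
    (hmeas.comp (by fun_prop)).aemeasurable
  have hlt := ae_lt_top' hsphere hfin
  rw [sphericalMean, integral_congr_ae (ae_of_all _ hgap), integral_sub (integrable_const _)
    (integrable_toReal_of_lintegral_ne_top hsphere hfin), mul_sub,
    inv_sphereArea_mul_integral_const, integral_toReal hsphere hlt]
  rfl

theorem SubharmonicOn.monotoneOn_sphericalMean [NeZero n] (hu : SubharmonicOn u Ω)
    {x : EuclideanSpace ℝ (Fin n)} {R : ℝ} (hR : closedBall x R ⊆ Ω) :
    MonotoneOn (sphericalMean u x) (Icc 0 R) := by
  obtain ⟨M, hM⟩ := (hu.1.mono hR).bddAbove_of_isCompact (isCompact_closedBall x R)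
  replace hM : ∀ y ∈ closedBall x R, u y ≤ M := fun y hy ↦ hM (mem_image_of_mem u hy)
  set h : EuclideanSpace ℝ (Fin n) → ℝ≥0∞ := gapBelow u M (closedBall x R)
  have hlsc : LowerSemicontinuous h := lowerSemicontinuous_gapBelow isClosed_closedBall
    (hu.1.mono hR) M
  have hmv : SuperMeanValueOn volume (fun z ↦ h (x + z)) (closedBall 0 R) := by
    simpa using (hu.superMeanValueOn_gapBelow hR hM).comp_add_left x
  intro a ha b hb hab
  have hx : x ∈ closedBall x R := mem_closedBall_self (ha.1.trans ha.2)
  have h₀ : h (x + 0) ≠ ∞ := by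
    rw [add_zero]
    exact (gapBelow_of_mem hx).trans_ne ENNReal.ofReal_ne_top
  have hanti := hmv.antitoneOn_sphereLIntegral (hlsc.comp (continuous_const_add x)) h₀
  have hfin {ρ : ℝ} (hρ : ρ ∈ Icc 0 R) :
      sphereLIntegral volume (fun z ↦ h (x + z)) ρ ≠ ∞ := by
    refine ne_top_of_le_ne_top ?_ (hanti (left_mem_Icc.2 (hρ.1.trans hρ.2)) hρ hρ.1)
    rw [sphereLIntegral_zero]
    exact ENNReal.mul_ne_top h₀ (measure_ne_top _ _)
  have hmean {ρ : ℝ} (hρ : ρ ∈ Icc 0 R) := sphericalMean_eq_sub_sphereLIntegral_gapBelow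
    (fun ξ ↦ by simp [norm_smul, abs_of_nonneg hρ.1, hρ.2]) hM hlsc.measurable (hfin hρ)
  rw [hmean ha, hmean hb]
  gcongr
  · exact inv_nonneg.2 sphereArea_pos.le
  · exact hfin ha
  · exact hanti ha hb hab

end Subharmonic

lemma closedBall_subset_of_mem_shrink {n : ℕ} {Ω : Set (EuclideanSpace ℝ (Fin n))} {δ : ℝ}
    {x : EuclideanSpace ℝ (Fin n)} (hx : x ∈ shrink Ω δ) : closedBall x δ ⊆ Ω :=
  (closedBall_subset_ball hx.2).trans ball_infDist_compl_subset

theorem stmt7_general {n : ℕ} (hn : 1 ≤ n) {Ω : Set (EuclideanSpace ℝ (Fin n))}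
    {u : EuclideanSpace ℝ (Fin n) → ℝ} (hu : SubharmonicOn u Ω) {x : EuclideanSpace ℝ (Fin n)}
    {R : ℝ} (hR : closedBall x R ⊆ Ω) :
    (∀ s ∈ Icc 0 R, 0 ≤ sphericalMean u x s - u x) ∧
      MonotoneOn (fun s ↦ sphericalMean u x s - u x) (Icc 0 R) := by
  have : NeZero n := ⟨Nat.one_le_iff_ne_zero.1 hn⟩
  have hmono := hu.monotoneOn_sphericalMean hR
  refine ⟨fun s hs ↦ sub_nonneg.2 ?_, fun s hs t ht hst ↦ sub_le_sub_right (hmono hs ht hst) _⟩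
  rw [← sphericalMean_zero u x]
  exact hmono (left_mem_Icc.2 (hs.1.trans hs.2)) hs hs.1

theorem stmt7 (n : ℕ) (hn : 1 ≤ n) (Ω : Set (EuclideanSpace ℝ (Fin n)))
    (hΩo : IsOpen Ω) (u : EuclideanSpace ℝ (Fin n) → ℝ) (hu : SubharmonicOn u Ω)
    (δ₀ : ℝ) (hδ₀ : 0 < δ₀) (x : EuclideanSpace ℝ (Fin n)) (hx : x ∈ shrink Ω δ₀) :
    (∀ s, 0 < s → s < δ₀ → 0 ≤ sphericalMean u x s - u x) ∧
      ∀ s t, 0 < s → s ≤ t → t < δ₀ →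
        sphericalMean u x s - u x ≤ sphericalMean u x t - u x := by
  have ⟨hnonneg, hmono⟩ := stmt7_general hn hu (closedBall_subset_of_mem_shrink hx)
  exact ⟨fun s h₀ hs ↦ hnonneg s ⟨h₀.le, hs.le⟩, fun s t h₀ hst ht ↦
    hmono ⟨h₀.le, hst.trans ht.le⟩ ⟨h₀.le.trans hst, ht.le⟩ hst⟩
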